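/- Let {X_i}_{i=1}^n be a real-valued (d = 1) martingale difference sequence adapted to {F_i}_{i=1}^n, F_0 ⊂ F_1 a sub-σ-field with E[X_1 | F_0] = 0 a.s. and E[|X_i|³ | F_0] < ∞ a.s., S := Σ_{i≤n} X_i, V a version of E[S² | F_0] with V > 0 a.s., and T a random variable whose conditional distribution given F_0 is N(0, V). Then there exists a universal constant C > 0 such that, almost surely, ρ(S, T | F_0) ≤ C[β' Γ'^{−1/2} + Γ'^{1/4}], where β' := β/V with β := Σ_{i=1}^n E[|E[X_i² | F_{i−1}] − σ_i²| | F_0], Γ' := Γ/V^{3/2} with Γ := Σ_{i=1}^n (E[|X_i|³ | F_0] + σ_i³), σ_i² := E[X_i² | F_0] a.s., and ρ(·, · | F_0) is the conditional Kolmogorov distance given F_0. -/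

import Mathlib

/-! The proof is Lindeberg's swapping method carried out conditionally on `F 0`.

Let `σ_i²` be a version of `E[X_i² | F_0]`. By conditional orthogonality of the increments,
`V = σ_1² + ⋯ + σ_n²` (`condExp_partialSum_sq`). For a test function `f` with three bounded
derivatives, the sum `S` is turned into a Gaussian variable of variance `V` by replacing the
increments, from the last one to the first, by conditionally independent Gaussians of variance
`σ_i²`. No such Gaussians are constructed on the probability space: they enter only through the
operator `gaussSmooth f v x = E[f (x + N(0, v))]`, evaluated at a random `F_0`-measurable variance.
A Taylor expansion of order two (`gaussSmooth_taylor`, `gaussSmooth_heat`) shows that one swap costs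
`A E[|E[X_i² | F_{i-1}] - σ_i²| | F_0] + M (E[|X_i|³ | F_0] + c σ_i³)`, with `A` and `M` bounds on
the second and third derivatives: this is `lindeberg_step`, and `lindeberg_telescope` adds these
costs up.

For `f` a smooth version of the indicator of `(-∞, r]` at scale `ε`, the derivatives are of order
`ε⁻²` and `ε⁻³` (`exists_smooth_indicator`), and passing from `f` back to the indicator costs
`ε / √V`, because the density of `N(0, V)` is at most `1 / √V` (`gaussianReal_Iic_add_le`). Hence the
two conditional cdfs differ at `r` by at most a constant times `ε / √V + β / ε² + Γ / ε³`, almost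
surely for all rational `r` and `ε` at once. The choice `ε ≈ √V Γ'^{1/4}` gives the claim at rational
points (`optimise`), and right continuity extends it to all real `r` (`abs_sub_le_of_rat`).

The conditional law of `T` is known only through its conditional characteristic function; that its
conditional cdf is the Gaussian one is `condExp_indicator_eq_gaussian`. -/

open MeasureTheory ProbabilityTheory Real

section Auxiliary

open scoped NNReal

/-! ### Smoothed indicators -/

/-- A `[0, 1]`-valued continuous function `f` together with functions `f₁`, `f₂` bounded by `B`
and `A` which serve as its first two derivatives, in the sense of a second-order Taylor expansion
with cubic error `M |x|³`. Only this expansion is recorded, since it is the property that survives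
averaging over translates (`gaussSmooth_taylor`) and that the swapping argument uses. -/
structure TaylorTriple (f f₁ f₂ : ℝ → ℝ) (B A M : ℝ) : Prop where
  cont : Continuous f
  cont₁ : Continuous f₁
  cont₂ : Continuous f₂
  nonneg : ∀ x, 0 ≤ f x
  le_one : ∀ x, f x ≤ 1
  bound₁ : ∀ x, |f₁ x| ≤ B
  bound₂ : ∀ x, |f₂ x| ≤ A
  taylor : ∀ y x, |f (y + x) - f y - f₁ y * x - f₂ y * x ^ 2 / 2| ≤ M * |x| ^ 3

lemma abs_sub_le_of_deriv_bound {f f' : ℝ → ℝ} {C x : ℝ}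
    (hf : ∀ t, HasDerivAt f (f' t) t) (hC : ∀ t, |t| ≤ |x| → |f' t| ≤ C) :
    |f x - f 0| ≤ C * |x| := by
  have h := (convex_closedBall (0 : ℝ) |x|).norm_image_sub_le_of_norm_hasDerivWithin_le
    (f := f) (f' := f') (C := C) (x := 0) (y := x) (fun t _ => (hf t).hasDerivWithinAt)
    (fun t ht => hC t (by simpa using ht)) (by simp) (by simp)
  simpa using h

/-- Second-order Taylor estimate from a Lipschitz second derivative, by applying the mean value
inequality twice. The constant is not optimal, which costs nothing here. -/
lemma taylor_two_of_lipschitz {f f₁ f₂ : ℝ → ℝ} {M : ℝ} (hM : 0 ≤ M)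
    (h₀ : ∀ t, HasDerivAt f (f₁ t) t) (h₁ : ∀ t, HasDerivAt f₁ (f₂ t) t)
    (h₂ : ∀ s t, |f₂ s - f₂ t| ≤ M * |s - t|) (y x : ℝ) :
    |f (y + x) - f y - f₁ y * x - f₂ y * x ^ 2 / 2| ≤ M * |x| ^ 3 := by
  have step₁ : ∀ z, |f₁ (y + z) - f₁ y - f₂ y * z| ≤ M * |z| ^ 2 := by
    intro z
    have h := abs_sub_le_of_deriv_bound (f := fun z => f₁ (y + z) - f₂ y * z)
      (f' := fun z => f₂ (y + z) - f₂ y) (C := M * |z|) (x := z)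
      (fun t => by
        have := ((h₁ (y + t)).comp_const_add y t).sub ((hasDerivAt_id' t).const_mul (f₂ y))
        rw [mul_one] at this
        exact this)
      (fun t ht => by
        have := h₂ (y + t) y
        simp only [add_sub_cancel_left] at this
        exact this.trans (by gcongr))
    calc _ = |f₁ (y + z) - f₂ y * z - (f₁ (y + 0) - f₂ y * 0)| := by congr 1; simp; ring
      _ ≤ _ := h
      _ = _ := by ring
  have h := abs_sub_le_of_deriv_bound (f := fun z => f (y + z) - f₁ y * z - f₂ y * z ^ 2 / 2)
      (f' := fun z => f₁ (y + z) - f₁ y - f₂ y * z) (C := M * |x| ^ 2) (x := x)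
      (fun t => by
        have := (((h₀ (y + t)).comp_const_add y t).sub
          ((hasDerivAt_id' t).const_mul (f₁ y))).sub
          ((((hasDerivAt_id' t).pow 2).const_mul (f₂ y)).div_const 2)
        refine HasDerivAt.congr_deriv (f := fun z => f (y + z) - f₁ y * z - f₂ y * z ^ 2 / 2)
          this ?_
        simp only [Nat.cast_ofNat]
        ring)
      (fun t ht => (step₁ t).trans (by gcongr))
  calc _ = |f (y + x) - f₁ y * x - f₂ y * x ^ 2 / 2
        - (f (y + 0) - f₁ y * 0 - f₂ y * 0 ^ 2 / 2)| := by congr 1; simp; ring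
    _ ≤ _ := h
    _ = _ := by ring

lemma exists_bound_of_eq_zero_off {g : ℝ → ℝ} (hg : Continuous g)
    (h0 : ∀ x, x ∉ Set.Icc (0 : ℝ) 1 → g x = 0) : ∃ K, 0 ≤ K ∧ ∀ x, |g x| ≤ K := by
  obtain ⟨K, hK⟩ := (isCompact_Icc (a := (0 : ℝ)) (b := 1)).exists_bound_of_continuousOn
    hg.continuousOn
  have hK0 : 0 ≤ K := (norm_nonneg _).trans (hK 0 (by simp))
  refine ⟨K, hK0, fun x => ?_⟩
  by_cases hx : x ∈ Set.Icc (0 : ℝ) 1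
  · exact hK x hx
  · rw [h0 x hx]; simpa

lemma deriv_eq_zero_off {g : ℝ → ℝ} {a b : ℝ} (ha : ∀ x < 0, g x = a) (hb : ∀ x > 1, g x = b) :
    ∀ x, x ∉ Set.Icc (0 : ℝ) 1 → deriv g x = 0 := by
  intro x hx
  rw [Set.mem_Icc, not_and_or, not_le, not_le] at hx
  rcases hx with hx | hx
  · have : g =ᶠ[nhds x] fun _ => a := by
      filter_upwards [Iio_mem_nhds hx] with y hy using ha y hy
    rw [this.deriv_eq]; simp
  · have : g =ᶠ[nhds x] fun _ => b := by
      filter_upwards [Ioi_mem_nhds hx] with y hy using hb y hy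
    rw [this.deriv_eq]; simp

/-- The unit step: Mathlib's `Real.smoothTransition`, whose derivatives vanish off `[0, 1]` and are
therefore bounded. -/
lemma exists_taylorTriple_step : ∃ K : ℝ, 0 ≤ K ∧ ∃ f f₁ f₂ : ℝ → ℝ,
    TaylorTriple f f₁ f₂ K K K ∧ (∀ x ≤ 0, f x = 0) ∧ (∀ x, 1 ≤ x → f x = 1) := by
  have hc : ContDiff ℝ 3 smoothTransition := smoothTransition.contDiff
  have hc1 : ContDiff ℝ 2 (deriv smoothTransition) :=
    ((contDiff_succ_iff_deriv (n := 2)).1 (by rw [show (2 + 1 : WithTop ℕ∞) = 3 by norm_num]; exact hc)).2.2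
  have hc2 : ContDiff ℝ 1 (deriv (deriv smoothTransition)) :=
    ((contDiff_succ_iff_deriv (n := 1)).1 (by rw [show (1 + 1 : WithTop ℕ∞) = 2 by norm_num]; exact hc1)).2.2
  have hc3 : ContDiff ℝ 0 (deriv (deriv (deriv smoothTransition))) :=
    ((contDiff_succ_iff_deriv (n := 0)).1 (by simpa using hc2)).2.2
  have z1 := deriv_eq_zero_off (g := smoothTransition) (a := 0) (b := 1)
    (fun x hx => smoothTransition.zero_of_nonpos hx.le)
    (fun x hx => smoothTransition.one_of_one_le (le_of_lt hx))
  have aux : ∀ {g : ℝ → ℝ}, (∀ x, x ∉ Set.Icc (0 : ℝ) 1 → g x = 0) →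
      (∀ x, x ∉ Set.Icc (0 : ℝ) 1 → deriv g x = 0) := fun {g} h =>
    deriv_eq_zero_off (a := 0) (b := 0) (fun x hx => h x (fun h' => absurd h'.1 (not_le.2 hx)))
      (fun x hx => h x (fun h' => absurd h'.2 (not_le.2 hx)))
  have z2 := aux z1
  have z3 := aux z2
  obtain ⟨K1, hK1, b1⟩ := exists_bound_of_eq_zero_off hc1.continuous z1
  obtain ⟨K2, hK2, b2⟩ := exists_bound_of_eq_zero_off hc2.continuous z2
  obtain ⟨K3, hK3, b3⟩ := exists_bound_of_eq_zero_off hc3.continuous z3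
  refine ⟨K1 + K2 + K3, by positivity, smoothTransition, _, _,
    ⟨hc.continuous, hc1.continuous, hc2.continuous, smoothTransition.nonneg,
      smoothTransition.le_one, fun x => (b1 x).trans (by linarith),
      fun x => (b2 x).trans (by linarith), fun y x => ?_⟩,
    fun x hx => smoothTransition.zero_of_nonpos hx,
    fun x hx => smoothTransition.one_of_one_le hx⟩
  refine (taylor_two_of_lipschitz hK3
    (fun t => (hc.differentiable (by simp) t).hasDerivAt)
    (fun t => (hc1.differentiable (by simp) t).hasDerivAt) (fun s t => ?_) y x).trans ?_
  · have h := (convex_univ (𝕜 := ℝ) (E := ℝ)).norm_image_sub_le_of_norm_hasDerivWithin_le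
      (f := deriv (deriv smoothTransition)) (C := K3) (x := t) (y := s)
      (fun u _ => (hc2.differentiable (by simp) u).hasDerivAt.hasDerivWithinAt)
      (fun u _ => b3 u) (by simp) (by simp)
    simpa using h
  · gcongr; linarith

/-- Smoothed versions of the indicator of `(-∞, r]` at scale `ε`; by scaling, the bounds on the
derivatives of order 1, 2, 3 are `K / ε`, `K / ε²`, `K / ε³` with `K` universal. -/
lemma exists_smooth_indicator : ∃ K : ℝ, 0 ≤ K ∧ ∀ (r ε : ℝ), 0 < ε → ∃ f f₁ f₂ : ℝ → ℝ,
    TaylorTriple f f₁ f₂ (K / ε) (K / ε ^ 2) (K / ε ^ 3) ∧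
      (∀ x ≤ r, f x = 1) ∧ (∀ x, r + ε ≤ x → f x = 0) := by
  obtain ⟨K, hK, g, g₁, g₂, ⟨hc, hc1, hc2, h0, h1, hb1, hb2, ht⟩, hz, ho⟩ :=
    exists_taylorTriple_step
  refine ⟨K, hK, fun r ε hε => ⟨fun x => 1 - g ((x - r) / ε), fun x => - g₁ ((x - r) / ε) / ε,
    fun x => - g₂ ((x - r) / ε) / ε ^ 2, ⟨by fun_prop, by fun_prop, by fun_prop,
      fun x => by simpa using h1 _, fun x => by simpa using h0 _, fun x => ?_, fun x => ?_,
      fun y x => ?_⟩, fun x hx => ?_, fun x hx => ?_⟩⟩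
  · rw [abs_div, abs_neg, abs_of_pos hε]; gcongr; exact hb1 _
  · rw [abs_div, abs_neg, abs_of_pos (pow_pos hε 2)]; gcongr; exact hb2 _
  · have := ht ((y - r) / ε) (x / ε)
    rw [← abs_neg]
    calc _ = |g ((y - r) / ε + x / ε) - g ((y - r) / ε) - g₁ ((y - r) / ε) * (x / ε)
          - g₂ ((y - r) / ε) * (x / ε) ^ 2 / 2| := by
            congr 1
            rw [show (y + x - r) / ε = (y - r) / ε + x / ε by ring]
            ring
      _ ≤ _ := this
      _ = _ := by rw [abs_div, abs_of_pos hε]; ring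
  · show 1 - g ((x - r) / ε) = 1
    rw [hz _ (div_nonpos_of_nonpos_of_nonneg (by linarith) hε.le)]; simp
  · show 1 - g ((x - r) / ε) = 0
    rw [ho _ ((one_le_div hε).2 (by linarith))]; simp

/-! ### Gaussian smoothing -/

/-- The mean of `f (x + Z)` for `Z` centred Gaussian of variance `v`; the variance `v = 0` is
allowed and gives `f x`. -/
noncomputable def gaussSmooth (f : ℝ → ℝ) (v : ℝ≥0) (x : ℝ) : ℝ :=
  ∫ y, f (x + y) ∂gaussianReal 0 v

/-- The third absolute moment of the standard Gaussian. -/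
noncomputable def gaussAbsThird : ℝ := ∫ z, |z| ^ 3 ∂gaussianReal 0 1

lemma gaussAbsThird_nonneg : 0 ≤ gaussAbsThird :=
  integral_nonneg fun _ => by positivity

/-- Joint measurability in the variance and the point, needed because the variance is random. -/
lemma stronglyMeasurable_gaussSmooth {f : ℝ → ℝ} (hf : Continuous f) :
    StronglyMeasurable fun p : ℝ≥0 × ℝ => gaussSmooth f p.1 p.2 := by
  let κ : Kernel (ℝ≥0 × ℝ) ℝ :=
    ⟨fun p => gaussianReal 0 p.1,
      measurable_gaussianReal.comp (measurable_const.prodMk measurable_fst)⟩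
  have : IsMarkovKernel κ := ⟨fun p => by
    change IsProbabilityMeasure (gaussianReal 0 p.1); infer_instance⟩
  have h : StronglyMeasurable fun q : (ℝ≥0 × ℝ) × ℝ => f (q.1.2 + q.2) :=
    (hf.comp (by fun_prop)).stronglyMeasurable
  exact h.integral_kernel_prod_right' (κ := κ)

lemma integrable_comp_add_of_bound {f : ℝ → ℝ} {B : ℝ} (hf : Continuous f)
    (hB : ∀ x, |f x| ≤ B) (ν : Measure ℝ) [IsFiniteMeasure ν] (x : ℝ) :
    Integrable (fun y => f (x + y)) ν :=
  Integrable.of_bound (by fun_prop) B (ae_of_all _ fun y => hB _)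

lemma abs_gaussSmooth_le {f : ℝ → ℝ} {B : ℝ} (hB : ∀ x, |f x| ≤ B) (v : ℝ≥0) (x : ℝ) :
    |gaussSmooth f v x| ≤ B := by
  have := norm_integral_le_of_norm_le_const (μ := gaussianReal 0 v) (f := fun y => f (x + y))
    (ae_of_all _ fun y => hB (x + y))
  simpa [gaussSmooth] using this

lemma gaussSmooth_zero (f : ℝ → ℝ) (x : ℝ) : gaussSmooth f 0 x = f x := by
  simp [gaussSmooth]

lemma TaylorTriple.abs_le_one {f f₁ f₂ : ℝ → ℝ} {B A M : ℝ} (h : TaylorTriple f f₁ f₂ B A M)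
    (x : ℝ) : |f x| ≤ 1 := abs_le.2 ⟨by linarith [h.nonneg x], h.le_one x⟩

lemma integral_sub_sub_sub {ν : Measure ℝ} {a b c d : ℝ → ℝ} (ha : Integrable a ν)
    (hb : Integrable b ν) (hc : Integrable c ν) (hd : Integrable d ν) :
    ∫ y, (a y - b y - c y - d y) ∂ν = ∫ y, a y ∂ν - ∫ y, b y ∂ν - ∫ y, c y ∂ν - ∫ y, d y ∂ν := by
  have hab : Integrable (fun y => a y - b y) ν := ha.sub hb
  have habc : Integrable (fun y => a y - b y - c y) ν := hab.sub hc
  rw [integral_sub habc hd, integral_sub hab hc, integral_sub ha hb]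

/-- Smoothing preserves the Taylor expansion, with the same error bound. -/
lemma gaussSmooth_taylor {f f₁ f₂ : ℝ → ℝ} {B A M : ℝ} (h : TaylorTriple f f₁ f₂ B A M)
    (v : ℝ≥0) (s x : ℝ) :
    |gaussSmooth f v (s + x) - gaussSmooth f v s - gaussSmooth f₁ v s * x
      - gaussSmooth f₂ v s * x ^ 2 / 2| ≤ M * |x| ^ 3 := by
  have i1 := integrable_comp_add_of_bound h.cont h.abs_le_one (gaussianReal 0 v)
  have i2 := integrable_comp_add_of_bound h.cont₁ h.bound₁ (gaussianReal 0 v)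
  have i3 := integrable_comp_add_of_bound h.cont₂ h.bound₂ (gaussianReal 0 v)
  have e : gaussSmooth f v (s + x) - gaussSmooth f v s - gaussSmooth f₁ v s * x
      - gaussSmooth f₂ v s * x ^ 2 / 2 = ∫ y, (f ((s + x) + y) - f (s + y) - f₁ (s + y) * x
        - f₂ (s + y) * (x ^ 2 / 2)) ∂gaussianReal 0 v := by
    rw [integral_sub_sub_sub (i1 _) (i1 _) ((i2 _).mul_const _) ((i3 _).mul_const _),
      integral_mul_const, integral_mul_const]
    simp only [gaussSmooth]; ring
  rw [e]
  have := norm_integral_le_of_norm_le_const (μ := gaussianReal 0 v)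
    (f := fun y => f ((s + x) + y) - f (s + y) - f₁ (s + y) * x - f₂ (s + y) * (x ^ 2 / 2))
    (C := M * |x| ^ 3) (ae_of_all _ fun y => by
      have := h.taylor (s + y) x
      rwa [show s + y + x = s + x + y by ring, mul_div_assoc] at this)
  simpa using this

/-- Semigroup property of Gaussian smoothing. -/
lemma gaussSmooth_add {f : ℝ → ℝ} {B : ℝ} (hf : Continuous f) (hB : ∀ x, |f x| ≤ B)
    (v w : ℝ≥0) (s : ℝ) :
    gaussSmooth f (v + w) s = ∫ z, gaussSmooth f v (s + z) ∂gaussianReal 0 w := by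
  have hc : gaussianReal 0 (v + w) = (gaussianReal 0 w).conv (gaussianReal 0 v) := by
    rw [gaussianReal_conv_gaussianReal, add_zero, add_comm]
  rw [gaussSmooth, hc, integral_conv (integrable_comp_add_of_bound hf hB _ s)]
  simp only [gaussSmooth, add_assoc]

lemma integrable_abs_pow_three_gaussianReal (w : ℝ≥0) :
    Integrable (fun z : ℝ => |z| ^ 3) (gaussianReal 0 w) := by
  have := (memLp_id_gaussianReal (μ := 0) (v := w) 3).integrable_norm_pow (p := 3) (by simp)
  simpa using this

lemma integral_abs_pow_three_gaussianReal (w : ℝ≥0) :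
    ∫ z, |z| ^ 3 ∂gaussianReal 0 w = gaussAbsThird * (w : ℝ) ^ ((3 : ℝ) / 2) := by
  have hm : gaussianReal 0 w = (gaussianReal 0 1).map (fun z => √(w : ℝ) * z) := by
    rw [gaussianReal_map_const_mul]
    congr 1
    · simp
    · ext; simp
  rw [hm, integral_map (by fun_prop) (by fun_prop)]
  have hs : √(w : ℝ) ^ 3 = (w : ℝ) ^ ((3 : ℝ) / 2) := by
    rw [sqrt_eq_rpow, ← rpow_natCast, ← rpow_mul w.coe_nonneg]; norm_num
  simp_rw [abs_mul, mul_pow, abs_of_nonneg (sqrt_nonneg (w : ℝ)), hs]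
  rw [integral_const_mul, gaussAbsThird, mul_comm]

/-- Increasing the variance from `v` to `v + w` changes the smoothed function by half the second
derivative times `w`, up to a third-moment error: `gaussSmooth_taylor` is integrated against
`N(0, w)`. This is the Gaussian half of a swap. -/
lemma gaussSmooth_heat {f f₁ f₂ : ℝ → ℝ} {B A M : ℝ} (h : TaylorTriple f f₁ f₂ B A M)
    (v w : ℝ≥0) (s : ℝ) :
    |gaussSmooth f (v + w) s - gaussSmooth f v s - gaussSmooth f₂ v s * w / 2|
      ≤ M * (gaussAbsThird * (w : ℝ) ^ ((3 : ℝ) / 2)) := by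
  set γ := gaussianReal 0 w
  have hmeas : Measurable (gaussSmooth f v) :=
    (stronglyMeasurable_gaussSmooth h.cont).measurable.comp (measurable_const.prodMk measurable_id)
  have i0 : Integrable (fun z => gaussSmooth f v (s + z)) γ :=
    Integrable.of_bound (hmeas.comp (by fun_prop)).aestronglyMeasurable 1
      (ae_of_all _ fun z => abs_gaussSmooth_le h.abs_le_one _ _)
  have i1 : Integrable (fun z : ℝ => z) γ :=
    (memLp_id_gaussianReal (μ := 0) (v := w) 1).integrable (by simp)
  have i2 : Integrable (fun z : ℝ => z ^ 2) γ :=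
    (memLp_id_gaussianReal (μ := 0) (v := w) 2).integrable_sq
  have e1 : ∫ z, z ∂γ = 0 := integral_id_gaussianReal
  have e2 : ∫ z, z ^ 2 ∂γ = w := by
    have := variance_fun_id_gaussianReal (μ := 0) (v := w)
    rw [variance_of_integral_eq_zero (by fun_prop) e1] at this
    simpa using this
  have e : gaussSmooth f (v + w) s - gaussSmooth f v s - gaussSmooth f₂ v s * w / 2
      = ∫ z, (gaussSmooth f v (s + z) - gaussSmooth f v s - gaussSmooth f₁ v s * z
        - (gaussSmooth f₂ v s / 2) * z ^ 2) ∂γ := by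
    rw [integral_sub_sub_sub i0 (integrable_const _) (i1.const_mul _) (i2.const_mul _), integral_const_mul, integral_const_mul, e1, e2,
      gaussSmooth_add h.cont h.abs_le_one]
    simp
    ring
  rw [e, ← integral_abs_pow_three_gaussianReal, ← integral_const_mul]
  refine norm_integral_le_of_norm_le (f := fun z => gaussSmooth f v (s + z) - gaussSmooth f v s
    - gaussSmooth f₁ v s * z - gaussSmooth f₂ v s / 2 * z ^ 2)
    ((integrable_abs_pow_three_gaussianReal w).const_mul M) (ae_of_all _ fun z => ?_)
  have := gaussSmooth_taylor h v s z
  rwa [show gaussSmooth f₂ v s * z ^ 2 / 2 = gaussSmooth f₂ v s / 2 * z ^ 2 by ring] at this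

/-! ### Conditionally Gaussian variables -/

section CondLaw

variable {Ω : Type*} {m m0 : MeasurableSpace Ω} {μ : Measure Ω} [IsProbabilityMeasure μ]

/-- A conditional characteristic function of the form `exp (-t² W / 2)` forces the conditional cdf
to be that of `N(0, W)`. On each set `s` of `m`, the law of `T` under `μ.restrict s` and the mixture
of the laws `N(0, W ω)` over `s` have the same characteristic function, hence coincide. -/
lemma condExp_indicator_eq_gaussian (hm : m ≤ m0) {W : Ω → ℝ≥0} (hW : Measurable[m] W)
    {T : Ω → ℝ} (hT : Measurable T)
    (hchar : ∀ t : ℝ, μ[fun ω => Complex.exp (Complex.I * ((t * T ω : ℝ) : ℂ)) | m]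
      =ᵐ[μ] fun ω => Complex.exp (((-(1 / 2) * t ^ 2 * (W ω : ℝ) : ℝ) : ℂ))) (r : ℝ) :
    μ[Set.indicator {ω | T ω ≤ r} (fun _ => (1 : ℝ)) | m]
      =ᵐ[μ] fun ω => (gaussianReal 0 (W ω)).real (Set.Iic r) := by
  let κ : Kernel Ω ℝ := ⟨fun ω => gaussianReal 0 (W ω),
    measurable_gaussianReal.comp (measurable_const.prodMk (hW.mono hm le_rfl))⟩
  have : IsMarkovKernel κ := ⟨fun p => by
    change IsProbabilityMeasure (gaussianReal 0 _); infer_instance⟩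
  have hset : MeasurableSet {ω | T ω ≤ r} := measurableSet_le hT measurable_const
  have hgm : Measurable[m] fun ω => (gaussianReal 0 (W ω)).real (Set.Iic r) :=
    ((Measure.measurable_coe measurableSet_Iic).comp
      (measurable_gaussianReal.comp (measurable_const.prodMk hW))).ennreal_toReal
  have hgi : Integrable (fun ω => (gaussianReal 0 (W ω)).real (Set.Iic r)) μ :=
    Integrable.of_bound (hgm.mono hm le_rfl).aestronglyMeasurable 1
      (ae_of_all _ fun ω => by simp [abs_of_nonneg, measureReal_le_one])
  symm
  refine ae_eq_condExp_of_forall_setIntegral_eq hm ((integrable_const 1).indicator hset)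
    (fun s _ _ => hgi.integrableOn) (fun s hs _ => ?_) hgm.stronglyMeasurable.aestronglyMeasurable
  -- equality of the two finite measures on `ℝ`, by uniqueness of characteristic functions
  have key : (μ.restrict s).map T = ((μ.restrict s) ⊗ₘ κ).snd := by
    refine Measure.ext_of_charFun (funext fun t => ?_)
    rw [charFun_apply_real, charFun_apply_real, integral_map hT.aemeasurable (by fun_prop),
      Measure.snd, integral_map (by fun_prop) (by fun_prop), Measure.integral_compProd]
    · have h1 : ∀ ω, ∫ y, Complex.exp (t * y * Complex.I) ∂κ ω
          = Complex.exp (((-(1 / 2) * t ^ 2 * (W ω : ℝ) : ℝ) : ℂ)) := fun ω => by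
        change ∫ y, Complex.exp (t * y * Complex.I) ∂gaussianReal 0 (W ω) = _
        rw [← charFun_apply_real, charFun_gaussianReal]
        congr 1; push_cast; ring
      simp only [h1]
      have h2 : Integrable (fun ω => Complex.exp (Complex.I * ((t * T ω : ℝ) : ℂ))) μ :=
        Integrable.of_bound (by fun_prop) 1 (ae_of_all _ fun ω => by
          rw [mul_comm, Complex.norm_exp_ofReal_mul_I])
      rw [← setIntegral_congr_ae (hm s hs) ((hchar t).mono fun ω h _ => h),
        setIntegral_condExp hm h2 hs]
      congr 1; ext ω; congr 1; push_cast; ring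
    · refine Integrable.of_bound (by fun_prop) 1 (ae_of_all _ fun p => ?_)
      rw [← Complex.ofReal_mul, Complex.norm_exp_ofReal_mul_I]
  have h3 := congrArg (fun ν => ν.real (Set.Iic r)) key
  have h4 : ∫ ω in s, Set.indicator {ω | T ω ≤ r} (fun _ => (1 : ℝ)) ω ∂μ
      = ((μ.restrict s).map T).real (Set.Iic r) := by
    rw [integral_indicator_const _ hset, map_measureReal_apply hT measurableSet_Iic]
    simp; rfl
  rw [h4, h3, ← integral_indicator_one measurableSet_Iic, Measure.snd,
    integral_map (by fun_prop)
      ((measurable_one.indicator measurableSet_Iic).aestronglyMeasurable),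
    Measure.integral_compProd]
  · congr 1; ext ω
    rw [integral_indicator_one measurableSet_Iic]; rfl
  · exact Integrable.of_bound
      ((measurable_one.indicator measurableSet_Iic).comp measurable_snd).aestronglyMeasurable 1
      (ae_of_all _ fun p => by
        by_cases h : p.2 ∈ Set.Iic r <;> simp [Set.indicator, h])

end CondLaw

/-- Anti-concentration: the density of `N(0, v)` is at most `1 / √v`. -/
lemma gaussianReal_Iic_add_le {v : ℝ≥0} (hv : v ≠ 0) {r ε : ℝ} (hε : 0 < ε) :
    (gaussianReal 0 v).real (Set.Iic (r + ε)) ≤ (gaussianReal 0 v).real (Set.Iic r)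
      + ε / √(v : ℝ) := by
  have hsplit : Set.Iic (r + ε) = Set.Iic r ∪ Set.Ioc r (r + ε) :=
    (Set.Iic_union_Ioc_eq_Iic (by linarith)).symm
  rw [hsplit]
  refine (measureReal_union_le _ _).trans ?_
  gcongr
  have hvp : (0 : ℝ) < v := by positivity
  rw [measureReal_def, gaussianReal_apply_eq_integral _ hv,
    ENNReal.toReal_ofReal (integral_nonneg fun _ => gaussianPDFReal_nonneg _ _ _)]
  have hb : ∀ x, gaussianPDFReal 0 v x ≤ (√(v : ℝ))⁻¹ := by
    intro x
    rw [gaussianPDFReal]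
    have h1 : rexp (-(x - 0) ^ 2 / (2 * v)) ≤ 1 := by
      rw [exp_le_one_iff]
      exact div_nonpos_of_nonpos_of_nonneg (by nlinarith [sq_nonneg (x - 0)]) (by positivity)
    have h2 : √(v : ℝ) ≤ √(2 * π * v) :=
      sqrt_le_sqrt (by nlinarith [pi_gt_three])
    have h3 : 0 < √(v : ℝ) := sqrt_pos.2 hvp
    calc _ ≤ (√(2 * π * v))⁻¹ * 1 := by gcongr
      _ ≤ _ := by rw [mul_one]; gcongr
  calc ∫ x in Set.Ioc r (r + ε), gaussianPDFReal 0 v x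
      ≤ ∫ x in Set.Ioc r (r + ε), (√(v : ℝ))⁻¹ :=
        setIntegral_mono (integrable_gaussianPDFReal 0 v).integrableOn
          (by simp) hb
    _ = ε / √(v : ℝ) := by simp [hε.le, div_eq_mul_inv]

/-! ### Replacing one increment by a Gaussian -/

section Lindeberg

variable {Ω : Type*} {m₀ m mΩ : MeasurableSpace Ω} {μ : Measure Ω}

lemma memLp_three_of_integrable {X : Ω → ℝ} (hX : Measurable X)
    (h3 : Integrable (fun ω => |X ω| ^ 3) μ) : MemLp X 3 μ := by
  have := (integrable_norm_rpow_iff (p := 3) (μ := μ) (f := X) hX.aestronglyMeasurable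
    (by simp) (by simp)).1
  refine this ?_
  have e : (fun ω => ‖X ω‖ ^ (3 : ENNReal).toReal) = fun ω => |X ω| ^ 3 := by
    ext ω
    rw [show (3 : ENNReal).toReal = ((3 : ℕ) : ℝ) by simp, rpow_natCast, norm_eq_abs]
  rw [e]; exact h3

/-- By conditional Jensen, `E[X² | m₀]^{3/2} ≤ E[|X|³ | m₀]`. -/
lemma integrable_condSecondMoment_rpow (hm₀ : m₀ ≤ mΩ) {X : Ω → ℝ}
    (h3 : Integrable (fun ω => |X ω| ^ 3) μ)
    {w : Ω → ℝ≥0} (hwm : Measurable[m₀] w)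
    (hw : (fun ω => (w ω : ℝ)) =ᵐ[μ] μ[fun ω => X ω ^ 2 | m₀]) :
    Integrable (fun ω => (w ω : ℝ) ^ ((3 : ℝ) / 2)) μ := by
  have e : (fun ω => ‖X ω ^ 2‖ ^ ((3 : ℝ) / 2)) = fun ω => |X ω| ^ 3 := by
    ext ω
    rw [norm_pow, ← rpow_natCast, ← rpow_mul (norm_nonneg _), ← rpow_natCast, norm_eq_abs]
    norm_num
  have hJ := Integrable.norm_condExp_rpow_le (m := m₀) (μ := μ) (f := fun ω => X ω ^ 2)
    (p := 3 / 2) (by norm_num) (by rw [e]; exact h3)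
  refine Integrable.mono' (g := μ[fun ω => ‖X ω ^ 2‖ ^ ((3 : ℝ) / 2) | m₀]) integrable_condExp
    ((hwm.mono hm₀ le_rfl).coe_nnreal_real.pow_const _).aestronglyMeasurable ?_
  filter_upwards [hJ, hw] with ω h1 h2
  rw [← h2] at h1
  have h4 : 0 ≤ (w ω : ℝ) := (w ω).coe_nonneg
  simp only [norm_eq_abs, abs_of_nonneg h4] at h1
  rwa [norm_eq_abs, abs_of_nonneg (rpow_nonneg h4 _)]

variable [IsProbabilityMeasure μ]

/-- Orthogonality of a martingale increment `X` to every `m`-measurable factor `Y`, conditionally on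
a smaller σ-algebra `m₀`. -/
lemma condExp_mul_eq_zero (hm₀ : m₀ ≤ m) (hm : m ≤ mΩ) {Y X : Ω → ℝ} (hY : StronglyMeasurable[m] Y)
    (hXi : Integrable X μ) (hYX : Integrable (Y * X) μ) (hX0 : μ[X | m] =ᵐ[μ] 0) :
    μ[Y * X | m₀] =ᵐ[μ] 0 := by
  have h1 : μ[Y * X | m] =ᵐ[μ] 0 := by
    filter_upwards [condExp_mul_of_stronglyMeasurable_left hY hYX hXi, hX0] with ω h h'
    simp [h, h']
  calc μ[Y * X | m₀] =ᵐ[μ] μ[μ[Y * X | m] | m₀] := (condExp_condExp_of_le hm₀ hm).symm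
    _ =ᵐ[μ] μ[(0 : Ω → ℝ) | m₀] := condExp_congr_ae h1
    _ =ᵐ[μ] 0 := by rw [condExp_zero]

/-- One swap. Given `m₀`, the increment `X` added to the past `Y` is compared with a Gaussian
increment of variance `w = E[X² | m₀]`. The first-order terms vanish by the martingale property; the
second-order terms do not cancel but leave `E[X² | m] - w`, because `X` is centred given the past
`m` and `w` matches its second moment only given `m₀`. -/
lemma lindeberg_step (hm₀ : m₀ ≤ m) (hm : m ≤ mΩ) {Y X : Ω → ℝ} {v w : Ω → ℝ≥0}
    (hY : Measurable[m] Y) (hX : Measurable X) (hv : Measurable[m₀] v) (hwm : Measurable[m₀] w)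
    (hX0 : μ[X | m] =ᵐ[μ] 0) (h3 : Integrable (fun ω => |X ω| ^ 3) μ)
    (hw : (fun ω => (w ω : ℝ)) =ᵐ[μ] μ[fun ω => X ω ^ 2 | m₀])
    {f f₁ f₂ : ℝ → ℝ} {B A M : ℝ} (h : TaylorTriple f f₁ f₂ B A M) (hA : 0 ≤ A) :
    ∀ᵐ ω ∂μ, |(μ[fun ω => gaussSmooth f (v ω) (Y ω + X ω)
        - gaussSmooth f (v ω + w ω) (Y ω) | m₀]) ω|
      ≤ A * (μ[fun ω => |(μ[fun ω => X ω ^ 2 | m]) ω - w ω| | m₀]) ω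
        + M * ((μ[fun ω => |X ω| ^ 3 | m₀]) ω + gaussAbsThird * (w ω : ℝ) ^ ((3 : ℝ) / 2)) := by
  have hm₀Ω := hm₀.trans hm
  have hXp := memLp_three_of_integrable hX h3
  have hX1 : Integrable X μ := hXp.integrable (by norm_num)
  have hX2 : Integrable (fun ω => X ω ^ 2) μ :=
    (hXp.mono_exponent (p := 2) (by norm_num)).integrable_sq
  have hwi : Integrable (fun ω => (w ω : ℝ)) μ := integrable_condExp.congr hw.symm
  have hw3 := integrable_condSecondMoment_rpow hm₀Ω h3 hwm hw
  have hYΩ := hY.mono hm le_rfl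
  have hvΩ := hv.mono hm₀Ω le_rfl
  have hwΩ := hwm.mono hm₀Ω le_rfl
  -- the `m`-measurable coefficients of the first and second order terms
  set a : Ω → ℝ := fun ω => gaussSmooth f₁ (v ω) (Y ω) with ha
  set b : Ω → ℝ := fun ω => gaussSmooth f₂ (v ω) (Y ω) / 2 with hb
  have ham : StronglyMeasurable[m] a :=
    ((stronglyMeasurable_gaussSmooth h.cont₁).measurable.comp
      ((hv.mono hm₀ le_rfl).prodMk hY)).stronglyMeasurable
  have hbm : StronglyMeasurable[m] b :=
    (((stronglyMeasurable_gaussSmooth h.cont₂).measurable.comp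
      ((hv.mono hm₀ le_rfl).prodMk hY)).div_const 2).stronglyMeasurable
  have haB : ∀ ω, ‖a ω‖ ≤ B := fun ω => abs_gaussSmooth_le h.bound₁ _ _
  have hbA : ∀ ω, |b ω| ≤ A := fun ω => by
    have := abs_gaussSmooth_le h.bound₂ (v ω) (Y ω)
    rw [hb]; simp only [abs_div, abs_two]; linarith
  have hai : Integrable (a * X) μ :=
    hX1.bdd_mul (ham.mono hm).aestronglyMeasurable (ae_of_all _ haB)
  set U : Ω → ℝ := fun ω => X ω ^ 2 - w ω with hU
  have hUi : Integrable U μ := hX2.sub hwi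
  have hbi : Integrable (b * U) μ :=
    hUi.bdd_mul (hbm.mono hm).aestronglyMeasurable (ae_of_all _ hbA)
  set D : Ω → ℝ := fun ω => gaussSmooth f (v ω) (Y ω + X ω)
        - gaussSmooth f (v ω + w ω) (Y ω) with hD
  have hG := (stronglyMeasurable_gaussSmooth h.cont).measurable
  have hDi : Integrable D μ := by
    refine Integrable.of_bound (C := 2) ?_ (ae_of_all _ fun ω => ?_)
    · exact ((hG.comp (hvΩ.prodMk (hYΩ.add hX))).sub
        (hG.comp ((hvΩ.add hwΩ).prodMk hYΩ))).aestronglyMeasurable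
    · have h1 := abs_gaussSmooth_le h.abs_le_one (v ω) (Y ω + X ω)
      have h2 := abs_gaussSmooth_le h.abs_le_one (v ω + w ω) (Y ω)
      exact (abs_sub _ _).trans (by linarith)
  set R : Ω → ℝ := D - (a * X + b * U) with hR
  have hRi : Integrable R μ := hDi.sub (hai.add hbi)
  have hRb : ∀ ω, |R ω| ≤ M * |X ω| ^ 3
      + M * gaussAbsThird * (w ω : ℝ) ^ ((3 : ℝ) / 2) := fun ω => by
    have h1 := gaussSmooth_taylor h (v ω) (Y ω) (X ω)
    have h2 := gaussSmooth_heat h (v ω) (w ω) (Y ω)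
    have e : R ω = (gaussSmooth f (v ω) (Y ω + X ω) - gaussSmooth f (v ω) (Y ω)
        - gaussSmooth f₁ (v ω) (Y ω) * X ω - gaussSmooth f₂ (v ω) (Y ω) * X ω ^ 2 / 2)
        - (gaussSmooth f (v ω + w ω) (Y ω) - gaussSmooth f (v ω) (Y ω)
          - gaussSmooth f₂ (v ω) (Y ω) * w ω / 2) := by
      simp only [hR, hD, ha, hb, hU, Pi.sub_apply, Pi.add_apply, Pi.mul_apply]; ring
    rw [e]
    exact (abs_sub _ _).trans (by linarith)
  have hfirst : μ[a * X | m₀] =ᵐ[μ] 0 := condExp_mul_eq_zero hm₀ hm ham hX1 hai hX0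
  have hcond : μ[U | m] =ᵐ[μ] fun ω => (μ[fun ω => X ω ^ 2 | m]) ω - w ω := by
    have h1 := condExp_sub hX2 hwi m
    have h2 : μ[fun ω => (w ω : ℝ) | m] = fun ω => (w ω : ℝ) :=
      condExp_of_stronglyMeasurable hm
        (hwm.mono hm₀ le_rfl).coe_nnreal_real.stronglyMeasurable hwi
    rw [h2] at h1
    exact h1
  have hsecond : ∀ᵐ ω ∂μ, |(μ[b * U | m₀]) ω|
      ≤ A * (μ[fun ω => |(μ[fun ω => X ω ^ 2 | m]) ω - w ω| | m₀]) ω := by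
    have e1 : μ[b * U | m₀] =ᵐ[μ]
        μ[b * fun ω => (μ[fun ω => X ω ^ 2 | m]) ω - w ω | m₀] := by
      refine (condExp_condExp_of_le hm₀ hm).symm.trans (condExp_congr_ae ?_)
      filter_upwards [condExp_mul_of_stronglyMeasurable_left hbm hbi hUi, hcond] with ω h1 h2
      rw [h1, Pi.mul_apply, Pi.mul_apply, h2]
    have hdi : Integrable (fun ω => (μ[fun ω => X ω ^ 2 | m]) ω - w ω) μ :=
      integrable_condExp.sub hwi
    have e2 := condExp_mono (m := m₀) (μ := μ)
      (f := |b * fun ω => (μ[fun ω => X ω ^ 2 | m]) ω - w ω|)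
      (g := A • fun ω => |(μ[fun ω => X ω ^ 2 | m]) ω - w ω|)
      (hdi.bdd_mul (hbm.mono hm).aestronglyMeasurable (ae_of_all _ hbA)).abs
      (hdi.abs.smul A) (ae_of_all _ fun ω => by
        simp only [Pi.abs_apply, Pi.mul_apply, Pi.smul_apply, smul_eq_mul, abs_mul]
        gcongr
        exact hbA ω)
    filter_upwards [e1, e2, abs_condExp_ae_le_condExp_abs (m := m₀) (μ := μ)
      (b * fun ω => (μ[fun ω => X ω ^ 2 | m]) ω - w ω),
      condExp_smul (μ := μ) A (fun ω => |(μ[fun ω => X ω ^ 2 | m]) ω - w ω|) m₀]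
      with ω h1 h2 h3 h4
    rw [h1]
    rw [h4, Pi.smul_apply, smul_eq_mul] at h2
    exact h3.trans h2
  have hthird : ∀ᵐ ω ∂μ, |(μ[R | m₀]) ω|
      ≤ M * ((μ[fun ω => |X ω| ^ 3 | m₀]) ω + gaussAbsThird * (w ω : ℝ) ^ ((3 : ℝ) / 2)) := by
    have i1 : Integrable (M • fun ω => |X ω| ^ 3) μ := h3.smul M
    have i2 : Integrable (fun ω => M * gaussAbsThird * (w ω : ℝ) ^ ((3 : ℝ) / 2)) μ :=
      hw3.const_mul _
    have e2 := condExp_mono (m := m₀) (μ := μ) (f := |R|)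
      (g := (M • fun ω => |X ω| ^ 3)
        + fun ω => M * gaussAbsThird * (w ω : ℝ) ^ ((3 : ℝ) / 2)) hRi.abs
      (i1.add i2) (ae_of_all _ fun ω => hRb ω)
    have e3 : μ[fun ω => M * gaussAbsThird * (w ω : ℝ) ^ ((3 : ℝ) / 2) | m₀]
        = fun ω => M * gaussAbsThird * (w ω : ℝ) ^ ((3 : ℝ) / 2) :=
      condExp_of_stronglyMeasurable hm₀Ω
        ((hwm.coe_nnreal_real.pow_const _).const_mul _).stronglyMeasurable i2
    have e4 := condExp_add i1 i2 m₀
    rw [e3] at e4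
    filter_upwards [e2, e4, abs_condExp_ae_le_condExp_abs (m := m₀) (μ := μ) R,
      condExp_smul (μ := μ) M (fun ω => |X ω| ^ 3) m₀] with ω h1 h2 h3 h4
    rw [h2, Pi.add_apply, h4, Pi.smul_apply, smul_eq_mul] at h1
    exact (h3.trans h1).trans (le_of_eq (by ring))
  have hsplit : μ[D | m₀] =ᵐ[μ] μ[a * X | m₀] + μ[b * U | m₀] + μ[R | m₀] := by
    have e : D = (a * X + b * U) + R := by rw [hR]; abel
    rw [e]
    filter_upwards [condExp_add (hai.add hbi) hRi m₀, condExp_add hai hbi m₀] with ω h1 h2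
    rw [h1, Pi.add_apply, h2]; rfl
  filter_upwards [hsplit, hfirst, hsecond, hthird] with ω h1 h2 h3 h4
  rw [h1, Pi.add_apply, Pi.add_apply, h2, Pi.zero_apply, zero_add]
  exact (abs_add_le _ _).trans (add_le_add h3 h4)

/-- Conditional Pythagoras for a martingale increment. -/
lemma condExp_add_sq (hm₀ : m₀ ≤ m) (hm : m ≤ mΩ) {Y X : Ω → ℝ} (hY : Measurable[m] Y)
    (hYp : MemLp Y 2 μ) (hXp : MemLp X 2 μ) (hX0 : μ[X | m] =ᵐ[μ] 0) :
    μ[fun ω => (Y ω + X ω) ^ 2 | m₀] =ᵐ[μ]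
      μ[fun ω => Y ω ^ 2 | m₀] + μ[fun ω => X ω ^ 2 | m₀] := by
  have hYX : Integrable (Y * X) μ := hYp.integrable_mul hXp
  have h0 := condExp_mul_eq_zero hm₀ hm hY.stronglyMeasurable (hXp.integrable (by norm_num)) hYX hX0
  have e : (fun ω => (Y ω + X ω) ^ 2)
      = ((fun ω => Y ω ^ 2) + fun ω => X ω ^ 2) + (2 : ℝ) • (Y * X) := by
    ext ω; simp; ring
  rw [e]
  filter_upwards [condExp_add (hYp.integrable_sq.add hXp.integrable_sq) (hYX.smul (2 : ℝ)) m₀,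
    condExp_add hYp.integrable_sq hXp.integrable_sq m₀, condExp_smul (μ := μ) (2 : ℝ) (Y * X) m₀,
    h0] with ω h1 h2 h3 h4
  rw [h1, Pi.add_apply, h2, h3, Pi.smul_apply, h4]
  simp

end Lindeberg

/-! ### The telescoping sum -/

section Telescope

open Finset

variable {Ω : Type*} {mΩ : MeasurableSpace Ω} {μ : Measure Ω}
  {F : ℕ → MeasurableSpace Ω} {X : ℕ → Ω → ℝ} {n : ℕ}

/-- The conditional second moment `E[X² | m]` as an `ℝ≥0`-valued function, so that it can serve as
the variance of `gaussianReal`. Truncating at `0` through `toNNReal` makes the chosen version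
nonnegative everywhere and changes it only on a null set. -/
noncomputable def condSecondMoment (μ : Measure Ω) (m : MeasurableSpace Ω) (X : Ω → ℝ) (ω : Ω) : ℝ≥0 :=
  ((μ[fun ω => X ω ^ 2 | m]) ω).toNNReal

lemma measurable_condSecondMoment (m : MeasurableSpace Ω) (X : Ω → ℝ) :
    Measurable[m] (condSecondMoment μ m X) :=
  stronglyMeasurable_condExp.measurable.real_toNNReal

lemma coe_condSecondMoment (m : MeasurableSpace Ω) (X : Ω → ℝ) :
    (fun ω => (condSecondMoment μ m X ω : ℝ)) =ᵐ[μ] μ[fun ω => X ω ^ 2 | m] := by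
  filter_upwards [condExp_nonneg (m := m) (μ := μ) (f := fun ω => X ω ^ 2)
    (ae_of_all _ fun ω => sq_nonneg (X ω))] with ω h
  exact coe_toNNReal _ h

lemma measurable_partialSum (hF : Monotone F) (hX : ∀ i ∈ Icc 1 n, Measurable[F i] (X i))
    {k : ℕ} (hk : k ≤ n) : Measurable[F k] fun ω => ∑ i ∈ Icc 1 k, X i ω := by
  refine Finset.measurable_fun_sum _ fun i hi => ?_
  rw [mem_Icc] at hi
  exact (hX i (mem_Icc.2 ⟨hi.1, hi.2.trans hk⟩)).mono (hF hi.2) le_rfl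

lemma measurable_tailVar {s : Finset ℕ} (m : MeasurableSpace Ω) :
    Measurable[m] fun ω => ∑ j ∈ s, condSecondMoment μ m (X j) ω :=
  Finset.measurable_fun_sum _ fun _ _ => measurable_condSecondMoment _ _

variable [IsProbabilityMeasure μ]

/-- The conditional variance of a partial sum is the sum of the conditional variances. -/
lemma condExp_partialSum_sq (hF : Monotone F) (hle : ∀ k, F k ≤ mΩ)
    (hX : ∀ i ∈ Icc 1 n, Measurable[F i] (X i))
    (hmart : ∀ i ∈ Icc 1 n, μ[X i | F (i - 1)] =ᵐ[μ] 0)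
    (h3 : ∀ i ∈ Icc 1 n, Integrable (fun ω => |X i ω| ^ 3) μ) (k : ℕ) (hk : k ≤ n) :
    μ[fun ω => (∑ i ∈ Icc 1 k, X i ω) ^ 2 | F 0]
      =ᵐ[μ] fun ω => ((∑ i ∈ Icc 1 k, condSecondMoment μ (F 0) (X i) ω : ℝ≥0) : ℝ) := by
  have hLp : ∀ i ∈ Icc 1 n, MemLp (X i) 2 μ := fun i hi =>
    (memLp_three_of_integrable ((hX i hi).mono (hle i) le_rfl) (h3 i hi)).mono_exponent
      (by norm_num)
  induction k with
  | zero =>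
    have : (fun _ : Ω => (0 : ℝ) ^ 2) = 0 := by ext; simp
    simp only [zero_lt_one, Icc_eq_empty_of_lt, sum_empty, this, condExp_zero]
    rfl
  | succ k ih =>
    have hk1 : k + 1 ∈ Icc 1 n := mem_Icc.2 ⟨by omega, hk⟩
    have hS : MemLp (fun ω => ∑ i ∈ Icc 1 k, X i ω) 2 μ := memLp_finsetSum _ fun i hi =>
      hLp i (mem_Icc.2 ⟨(mem_Icc.1 hi).1, (mem_Icc.1 hi).2.trans (by omega)⟩)
    have h1 := condExp_add_sq (m₀ := F 0) (hF (Nat.zero_le k)) (hle k)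
      (measurable_partialSum hF hX (by omega)) hS (hLp _ hk1) (hmart _ hk1)
    simp only [sum_Icc_succ_top (Nat.le_add_left 1 k)]
    filter_upwards [h1, ih (by omega), coe_condSecondMoment (μ := μ) (F 0) (X (k + 1))] with ω h1 h2 h3
    rw [h1, Pi.add_apply, h2, ← h3, NNReal.coe_add]

/-- Swapping the increments one after another. When `X_{k+1}, …, X_n` have been replaced, the sum
`X_1 + ⋯ + X_k` is smoothed with the variance `σ_{k+1}² + ⋯ + σ_n²`; `k = 0` is the fully Gaussian
case and `k = n` the original sum. -/
lemma lindeberg_telescope (hF : Monotone F) (hle : ∀ k, F k ≤ mΩ)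
    (hX : ∀ i ∈ Icc 1 n, Measurable[F i] (X i))
    (hmart : ∀ i ∈ Icc 1 n, μ[X i | F (i - 1)] =ᵐ[μ] 0)
    (h3 : ∀ i ∈ Icc 1 n, Integrable (fun ω => |X i ω| ^ 3) μ)
    {f f₁ f₂ : ℝ → ℝ} {B A M : ℝ} (h : TaylorTriple f f₁ f₂ B A M) (hA : 0 ≤ A)
    (k : ℕ) (hk : k ≤ n) :
    ∀ᵐ ω ∂μ, |(μ[fun ω => gaussSmooth f (∑ j ∈ Ioc k n, condSecondMoment μ (F 0) (X j) ω)
          (∑ i ∈ Icc 1 k, X i ω) | F 0]) ω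
        - gaussSmooth f (∑ j ∈ Icc 1 n, condSecondMoment μ (F 0) (X j) ω) 0|
      ≤ ∑ i ∈ Icc 1 k, (A * (μ[fun ω => |(μ[fun ω => X i ω ^ 2 | F (i - 1)]) ω
          - condSecondMoment μ (F 0) (X i) ω| | F 0]) ω
        + M * ((μ[fun ω => |X i ω| ^ 3 | F 0]) ω
          + gaussAbsThird * (condSecondMoment μ (F 0) (X i) ω : ℝ) ^ ((3 : ℝ) / 2))) := by
  have hG := (stronglyMeasurable_gaussSmooth h.cont).measurable
  have hint : ∀ {v : Ω → ℝ≥0} {Y : Ω → ℝ}, Measurable[F 0] v → Measurable Y →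
      Integrable (fun ω => gaussSmooth f (v ω) (Y ω)) μ := fun hv hY =>
    Integrable.of_bound (hG.comp ((hv.mono (hle 0) le_rfl).prodMk hY)).aestronglyMeasurable 1
      (ae_of_all _ fun ω => abs_gaussSmooth_le h.abs_le_one _ _)
  induction k with
  | zero =>
    have hI : Icc 1 n = Ioc 0 n := Icc_add_one_left_eq_Ioc 0 n
    refine ae_of_all _ fun ω => ?_
    rw [condExp_of_stronglyMeasurable (hle 0)]
    · simp [hI]
    · simp only [zero_lt_one, Icc_eq_empty_of_lt, sum_empty]
      have : Measurable[F 0] fun ω =>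
          gaussSmooth f (∑ j ∈ Ioc 0 n, condSecondMoment μ (F 0) (X j) ω) 0 :=
        hG.comp ((measurable_tailVar (μ := μ) (X := X) (s := Ioc 0 n) (F 0)).prodMk
          (measurable_const (a := (0 : ℝ))))
      exact this.stronglyMeasurable
    · exact hint (measurable_tailVar (F 0)) (by simp)
  | succ k ih =>
    have hk1 : k + 1 ∈ Icc 1 n := mem_Icc.2 ⟨by omega, hk⟩
    have hsplit : ∀ ω, ∑ j ∈ Ioc k n, condSecondMoment μ (F 0) (X j) ω
        = ∑ j ∈ Ioc (k + 1) n, condSecondMoment μ (F 0) (X j) ω + condSecondMoment μ (F 0) (X (k + 1)) ω := by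
      intro ω
      rw [← sum_Ioc_consecutive _ (Nat.le_succ k) hk, Nat.succ_eq_add_one,
        Nat.Ioc_succ_singleton, sum_singleton, add_comm]
    have hY : Measurable[F k] fun ω => ∑ i ∈ Icc 1 k, X i ω :=
      measurable_partialSum hF hX (by omega)
    have hXk : Measurable (X (k + 1)) := (hX _ hk1).mono (hle _) le_rfl
    have hstep := lindeberg_step (hF (Nat.zero_le k)) (hle k) hY hXk
      (v := fun ω => ∑ j ∈ Ioc (k + 1) n, condSecondMoment μ (F 0) (X j) ω)
      (measurable_tailVar (F 0)) (measurable_condSecondMoment (F 0) (X (k + 1)))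
      (hmart _ hk1) (h3 _ hk1) (coe_condSecondMoment _ _) h hA
    have i1 := hint (measurable_tailVar (μ := μ) (X := X) (s := Ioc (k + 1) n) (F 0))
      ((hY.mono (hle k) le_rfl).add hXk)
    have i2 := hint (measurable_tailVar (μ := μ) (X := X) (s := Ioc k n) (F 0))
      (hY.mono (hle k) le_rfl)
    simp only [hsplit] at ih i2
    have hsub := condExp_sub i1 i2 (F 0)
    simp only [sum_Icc_succ_top (Nat.le_add_left 1 k), Nat.add_sub_cancel]
    filter_upwards [ih (by omega), hstep, hsub] with ω h1 h2 h3
    have e : (μ[fun ω => gaussSmooth f (∑ j ∈ Ioc (k + 1) n, condSecondMoment μ (F 0) (X j) ω)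
          (∑ i ∈ Icc 1 k, X i ω + X (k + 1) ω)
        - gaussSmooth f (∑ j ∈ Ioc (k + 1) n, condSecondMoment μ (F 0) (X j) ω
          + condSecondMoment μ (F 0) (X (k + 1)) ω) (∑ i ∈ Icc 1 k, X i ω) | F 0]) ω
        = (μ[fun ω => gaussSmooth f (∑ j ∈ Ioc (k + 1) n, condSecondMoment μ (F 0) (X j) ω)
          (∑ i ∈ Icc 1 k, X i ω + X (k + 1) ω) | F 0]) ω
        - (μ[fun ω => gaussSmooth f (∑ j ∈ Ioc (k + 1) n, condSecondMoment μ (F 0) (X j) ω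
          + condSecondMoment μ (F 0) (X (k + 1)) ω) (∑ i ∈ Icc 1 k, X i ω) | F 0]) ω := h3
    rw [e] at h2
    have := abs_add_le _ _ |>.trans (add_le_add h1 h2)
    refine le_trans (le_of_eq ?_) this
    congr 1
    ring

end Telescope

/-! ### From smooth test functions to distribution functions -/

lemma gaussSmooth_between {f f₁ f₂ : ℝ → ℝ} {B A M r ε : ℝ} (h : TaylorTriple f f₁ f₂ B A M)
    (h1 : ∀ x ≤ r, f x = 1) (h0 : ∀ x, r + ε ≤ x → f x = 0) (v : ℝ≥0) :
    (gaussianReal 0 v).real (Set.Iic r) ≤ gaussSmooth f v 0 ∧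
      gaussSmooth f v 0 ≤ (gaussianReal 0 v).real (Set.Iic (r + ε)) := by
  have hi := integrable_comp_add_of_bound h.cont h.abs_le_one (gaussianReal 0 v) 0
  have hind : ∀ a : ℝ, Integrable ((Set.Iic a).indicator (1 : ℝ → ℝ)) (gaussianReal 0 v) :=
    fun a => (integrable_const (1 : ℝ)).indicator measurableSet_Iic
  constructor
  · rw [← integral_indicator_one measurableSet_Iic]
    refine integral_mono (hind r) hi fun x => ?_
    by_cases hx : x ≤ r
    · simp [hx, h1 x hx]
    · simpa [hx] using h.nonneg x
  · rw [← integral_indicator_one measurableSet_Iic]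
    refine integral_mono hi (hind _) fun x => ?_
    by_cases hx : x ≤ r + ε
    · simpa [hx] using h.le_one x
    · simp [hx, h0 x (not_le.1 hx).le]

lemma condExp_between {Ω : Type*} {m mΩ : MeasurableSpace Ω} {μ : Measure Ω}
    [IsProbabilityMeasure μ] {f f₁ f₂ : ℝ → ℝ} {B A M r ε : ℝ}
    (h : TaylorTriple f f₁ f₂ B A M)
    (h1 : ∀ x ≤ r, f x = 1) (h0 : ∀ x, r + ε ≤ x → f x = 0) {S : Ω → ℝ} (hS : Measurable S) :
    ∀ᵐ ω ∂μ, (μ[Set.indicator {ω | S ω ≤ r} (fun _ => (1 : ℝ)) | m]) ω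
        ≤ (μ[fun ω => f (S ω) | m]) ω ∧
      (μ[fun ω => f (S ω) | m]) ω
        ≤ (μ[Set.indicator {ω | S ω ≤ r + ε} (fun _ => (1 : ℝ)) | m]) ω := by
  have hi : Integrable (fun ω => f (S ω)) μ :=
    Integrable.of_bound (h.cont.measurable.comp hS).aestronglyMeasurable 1
      (ae_of_all _ fun ω => h.abs_le_one _)
  have hind : ∀ a : ℝ, Integrable (Set.indicator {ω | S ω ≤ a} (fun _ => (1 : ℝ))) μ :=
    fun a => (integrable_const (1 : ℝ)).indicator (measurableSet_le hS measurable_const)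
  have e1 := condExp_mono (m := m) (hind r) hi (ae_of_all _ fun ω => by
    by_cases hx : S ω ≤ r
    · simp [hx, h1 _ hx]
    · simpa [hx] using h.nonneg (S ω))
  have e2 := condExp_mono (m := m) hi (hind (r + ε)) (ae_of_all _ fun ω => by
    by_cases hx : S ω ≤ r + ε
    · simpa [hx] using h.le_one (S ω)
    · simp [hx, h0 _ (not_le.1 hx).le])
  filter_upwards [e1, e2] with ω a b using ⟨a, b⟩

/-- Choice of the smoothing scale: `ε` of order `s G^{1/4}` with `G = Γ / s³` balances the
anti-concentration term `ε / s` against the third-moment term. The scale has to be rational, so it is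
taken between this value and its double. -/
lemma optimise {Δ s β Γ K L : ℝ} (hs : 0 < s) (hβ : 0 ≤ β) (hΓ : 0 < Γ) (hK : 0 ≤ K)
    (hL : 0 ≤ L)
    (h : ∀ ε : ℚ, 0 < ε → Δ ≤ ε / s + K / (ε : ℝ) ^ 2 * β + L / (ε : ℝ) ^ 3 * Γ) :
    Δ ≤ (2 + K + L) * (β / s ^ 2 / √(Γ / s ^ 3) + (Γ / s ^ 3) ^ ((1 : ℝ) / 4)) := by
  set G := Γ / s ^ 3 with hG
  have hGpos : 0 < G := by positivity
  set p := G ^ ((1 : ℝ) / 4) with hp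
  have hppos : 0 < p := rpow_pos_of_pos hGpos _
  have hp4 : p ^ 4 = G := by
    rw [hp, ← rpow_natCast, ← rpow_mul hGpos.le]; norm_num
  have hp2 : √G = p ^ 2 := by
    rw [← hp4, show p ^ 4 = (p ^ 2) ^ 2 by ring, sqrt_sq (by positivity)]
  obtain ⟨ε, hε1, hε2⟩ := exists_rat_btwn (show s * p < 2 * (s * p) by nlinarith [mul_pos hs hppos])
  have hsp : 0 < s * p := mul_pos hs hppos
  have hε0 : (0 : ℝ) < ε := hsp.trans hε1
  have key := h ε (by exact_mod_cast hε0)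
  have t1 : (ε : ℝ) / s ≤ 2 * p := by
    rw [div_le_iff₀ hs]; nlinarith
  have t2 : K / (ε : ℝ) ^ 2 * β ≤ K * (β / s ^ 2 / p ^ 2) := by
    calc K / (ε : ℝ) ^ 2 * β ≤ K / (s * p) ^ 2 * β := by gcongr
      _ = _ := by field_simp
  have t3 : L / (ε : ℝ) ^ 3 * Γ ≤ L * p := by
    have hΓe : Γ = p ^ 4 * s ^ 3 := by rw [hp4, hG]; field_simp
    calc L / (ε : ℝ) ^ 3 * Γ ≤ L / (s * p) ^ 3 * Γ := by gcongr
      _ = L * p := by rw [hΓe]; field_simp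
  rw [hp2]
  have hb : 0 ≤ β / s ^ 2 / p ^ 2 := by positivity
  nlinarith [mul_nonneg hK hppos.le, mul_nonneg hL hb]

/-- For right-continuous functions a bound at the rationals extends to all reals. -/
lemma abs_sub_le_of_rat {f g : ℝ → ℝ} {B : ℝ}
    (hf : ∀ r, ContinuousWithinAt f (Set.Ici r) r) (hg : ∀ r, ContinuousWithinAt g (Set.Ici r) r)
    (h : ∀ q : ℚ, |f q - g q| ≤ B) (r : ℝ) : |f r - g r| ≤ B := by
  obtain ⟨u, -, hu, hlim⟩ := Real.exists_seq_rat_strictAnti_tendsto r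
  have hw : Filter.Tendsto (fun k => ((u k : ℚ) : ℝ)) Filter.atTop (nhdsWithin r (Set.Ici r)) :=
    tendsto_nhdsWithin_iff.2 ⟨hlim, Filter.Eventually.of_forall fun k => (hu k).le⟩
  exact le_of_tendsto' ((((hf r).sub (hg r)).abs.tendsto).comp hw) fun k => h (u k)

/-- Comparison of the conditional cdf of the sum with that of `N(0, σ_1² + ⋯ + σ_n²)`, up to a
shift `ε` and the swapping error `D`, at one fixed pair `r`, `ε`. -/
lemma ae_comparison {Ω : Type*} {mΩ : MeasurableSpace Ω} {μ : Measure Ω} [IsProbabilityMeasure μ]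
    {F : ℕ → MeasurableSpace Ω} {X : ℕ → Ω → ℝ} {n : ℕ} {K : ℝ} (hK : 0 ≤ K)
    (hsm : ∀ r ε : ℝ, 0 < ε → ∃ f f₁ f₂ : ℝ → ℝ,
      TaylorTriple f f₁ f₂ (K / ε) (K / ε ^ 2) (K / ε ^ 3) ∧ (∀ x ≤ r, f x = 1) ∧
        (∀ x, r + ε ≤ x → f x = 0))
    (hF : Monotone F) (hle : ∀ k, F k ≤ mΩ)
    (hX : ∀ i ∈ Finset.Icc 1 n, Measurable[F i] (X i))
    (hmart : ∀ i ∈ Finset.Icc 1 n, μ[X i | F (i - 1)] =ᵐ[μ] 0)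
    (h3 : ∀ i ∈ Finset.Icc 1 n, Integrable (fun ω => |X i ω| ^ 3) μ)
    (r ε : ℝ) (hε : 0 < ε) :
    ∀ᵐ ω ∂μ,
      let D := ∑ i ∈ Finset.Icc 1 n, (K / ε ^ 2 * (μ[fun ω => |(μ[fun ω => X i ω ^ 2 | F (i - 1)]) ω
          - condSecondMoment μ (F 0) (X i) ω| | F 0]) ω
        + K / ε ^ 3 * ((μ[fun ω => |X i ω| ^ 3 | F 0]) ω
          + gaussAbsThird * (condSecondMoment μ (F 0) (X i) ω : ℝ) ^ ((3 : ℝ) / 2)))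
      let γ := gaussianReal 0 (∑ j ∈ Finset.Icc 1 n, condSecondMoment μ (F 0) (X j) ω)
      (μ[Set.indicator {ω | (∑ i ∈ Finset.Icc 1 n, X i ω) ≤ r} (fun _ => (1 : ℝ)) | F 0]) ω
          ≤ γ.real (Set.Iic (r + ε)) + D ∧
        γ.real (Set.Iic r) - D ≤
          (μ[Set.indicator {ω | (∑ i ∈ Finset.Icc 1 n, X i ω) ≤ r + ε}
            (fun _ => (1 : ℝ)) | F 0]) ω := by
  obtain ⟨f, f₁, f₂, hf, hf1, hf0⟩ := hsm r ε hε
  have hS : Measurable fun ω => ∑ i ∈ Finset.Icc 1 n, X i ω :=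
    (measurable_partialSum hF hX le_rfl).mono (hle n) le_rfl
  have ht := lindeberg_telescope hF hle hX hmart h3 hf (by positivity) n le_rfl
  simp only [Finset.Ioc_self, Finset.sum_empty, gaussSmooth_zero] at ht
  filter_upwards [ht, condExp_between (m := F 0) (μ := μ) hf hf1 hf0 hS] with ω h1 h2
  have h4 := gaussSmooth_between hf hf1 hf0
    (∑ j ∈ Finset.Icc 1 n, condSecondMoment μ (F 0) (X j) ω)
  have h5 := abs_le.1 h1
  intro D γ
  exact ⟨by linarith [h4.2, h2.1, h5.2], by linarith [h4.1, h2.2, h5.1]⟩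

end Auxiliary

/-! ### The Berry–Esseen bound -/

/-- **One-dimensional conditional Berry–Esseen bound for martingales.**
There is a universal constant `C > 0` such that for every real-valued martingale
difference sequence `{X_i}_{i=1}^n` adapted to `{F_i}` with `E[X_1 | F_0] = 0` and
finite conditional third moments, `S = Σ_{i≤n} X_i`, `V` a version of `E[S² | F_0]`
with `V > 0` a.s., `T` conditionally `N(0, V)` given `F_0`, and regular conditional
cdfs `FS`, `FT` of `S`, `T` given `F_0`, almost surely
`ρ(S, T | F_0) ≤ C[β' Γ'^{−1/2} + Γ'^{1/4}]`, where `β' = β/V`, `Γ' = Γ/V^{3/2}`,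
`β = Σ_i E[|E[X_i² | F_{i−1}] − σ_i²| | F_0]`, `Γ = Σ_i (E[|X_i|³ | F_0] + σ_i³)`, and
`σ_i²` is a version of `E[X_i² | F_0]`. -/
theorem stmt_17 :
    ∃ C : ℝ, 0 < C ∧
    ∀ (n : ℕ), 0 < n →
    ∀ (Ω : Type) [m0 : MeasurableSpace Ω] (μ : Measure Ω) [IsProbabilityMeasure μ]
      (F : ℕ → MeasurableSpace Ω) (X : ℕ → Ω → ℝ)
      (Sig : ℕ → Ω → ℝ) (V : Ω → ℝ) (T : Ω → ℝ) (FS FT : Ω → ℝ → ℝ),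
      Monotone F → (∀ k, F k ≤ m0) →
      (∀ i ∈ Finset.Icc 1 n, Measurable[F i] (X i)) →
      (∀ i ∈ Finset.Icc 1 n, μ[X i | F (i - 1)] =ᵐ[μ] 0) →
      (∀ i ∈ Finset.Icc 1 n, Integrable (fun ω => |X i ω| ^ 3) μ) →
      (∀ i ∈ Finset.Icc 1 n, Sig i =ᵐ[μ] μ[fun ω => X i ω ^ 2 | F 0]) →
      (V =ᵐ[μ] μ[fun ω => (∑ i ∈ Finset.Icc 1 n, X i ω) ^ 2 | F 0]) →
      (∀ᵐ ω ∂μ, 0 < V ω) →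
      Measurable T →
      (∀ t : ℝ,
        μ[fun ω => Complex.exp (Complex.I * ((t * T ω : ℝ) : ℂ)) | F 0]
          =ᵐ[μ] fun ω => Complex.exp (((-(1 / 2) * t ^ 2 * V ω : ℝ) : ℂ))) →
      -- `FS` is a regular conditional cdf of `S` given `F 0`
      (∀ r : ℝ, (fun ω => FS ω r) =ᵐ[μ]
        μ[Set.indicator {ω | (∑ i ∈ Finset.Icc 1 n, X i ω) ≤ r}
            (fun _ => (1 : ℝ)) | F 0]) →
      (∀ ω, Monotone (FS ω)) →
      (∀ ω r, ContinuousWithinAt (FS ω) (Set.Ici r) r) →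
      (∀ ω, Filter.Tendsto (FS ω) Filter.atTop (nhds 1)) →
      (∀ ω, Filter.Tendsto (FS ω) Filter.atBot (nhds 0)) →
      -- `FT` is a regular conditional cdf of `T` given `F 0`
      (∀ r : ℝ, (fun ω => FT ω r) =ᵐ[μ]
        μ[Set.indicator {ω | T ω ≤ r} (fun _ => (1 : ℝ)) | F 0]) →
      (∀ ω, Monotone (FT ω)) →
      (∀ ω r, ContinuousWithinAt (FT ω) (Set.Ici r) r) →
      (∀ ω, Filter.Tendsto (FT ω) Filter.atTop (nhds 1)) →
      (∀ ω, Filter.Tendsto (FT ω) Filter.atBot (nhds 0)) →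
      ∀ᵐ ω ∂μ,
        (⨆ r : ℝ, |FS ω r - FT ω r|) ≤
          C * (((∑ i ∈ Finset.Icc 1 n,
                  (μ[fun ω' =>
                      |(μ[fun ω'' => X i ω'' ^ 2 | F (i - 1)]) ω' - Sig i ω'|
                    | F 0]) ω) / V ω) /
                Real.sqrt
                  ((∑ i ∈ Finset.Icc 1 n,
                      ((μ[fun ω' => |X i ω'| ^ 3 | F 0]) ω +
                        Sig i ω ^ ((3 : ℝ) / 2))) / V ω ^ ((3 : ℝ) / 2)) +
              ((∑ i ∈ Finset.Icc 1 n,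
                  ((μ[fun ω' => |X i ω'| ^ 3 | F 0]) ω +
                    Sig i ω ^ ((3 : ℝ) / 2))) / V ω ^ ((3 : ℝ) / 2)) ^ ((1 : ℝ) / 4)) := by
  obtain ⟨K, hK, hsm⟩ := exists_smooth_indicator
  have hm3 := gaussAbsThird_nonneg
  refine ⟨2 + K + K * (1 + gaussAbsThird), by positivity, ?_⟩
  intro n _ Ω m0 μ _ F X Sig V T FS FT hF hle hX hmart h3 hSig hV hVpos hT hchar
    hFS _ hFScont _ _ hFT _ hFTcont _ _
  set W : Ω → NNReal := fun ω => ∑ i ∈ Finset.Icc 1 n, condSecondMoment μ (F 0) (X i) ω with hWdef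
  have hW : Measurable[F 0] W := measurable_tailVar (F 0)
  have hVW : V =ᵐ[μ] fun ω => (W ω : ℝ) :=
    hV.trans (condExp_partialSum_sq hF hle hX hmart h3 n le_rfl)
  have hSigW : ∀ i ∈ Finset.Icc 1 n,
      Sig i =ᵐ[μ] fun ω => (condSecondMoment μ (F 0) (X i) ω : ℝ) := fun i hi =>
    (hSig i hi).trans (coe_condSecondMoment _ _).symm
  have hgauss := condExp_indicator_eq_gaussian (hle 0) hW hT fun t => (hchar t).trans (by
    filter_upwards [hVW] with ω h
    rw [h])
  have hFTq : ∀ᵐ ω ∂μ, ∀ q : ℚ, FT ω q = (gaussianReal 0 (W ω)).real (Set.Iic (q : ℝ)) :=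
    ae_all_iff.2 fun q => (hFT q).trans (hgauss q)
  have hFSq : ∀ᵐ ω ∂μ, ∀ q : ℚ, FS ω q =
      (μ[Set.indicator {ω | (∑ i ∈ Finset.Icc 1 n, X i ω) ≤ (q : ℝ)}
        (fun _ => (1 : ℝ)) | F 0]) ω := ae_all_iff.2 fun q => hFS q
  have hcmp := ae_all_iff.2 fun q : ℚ => ae_all_iff.2 fun ε : {e : ℚ // 0 < e} =>
    ae_comparison hK hsm hF hle hX hmart h3 (q : ℝ) (ε : ℚ) (by exact_mod_cast ε.2)
  have hSig' : ∀ᵐ ω ∂μ, ∀ i ∈ Finset.Icc 1 n,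
      Sig i ω = (condSecondMoment μ (F 0) (X i) ω : ℝ) :=
    (ae_ball_iff (Finset.countable_toSet _)).2 hSigW
  have hβ : ∀ᵐ ω ∂μ, ∀ i ∈ Finset.Icc 1 n,
      (μ[fun ω => |(μ[fun ω => X i ω ^ 2 | F (i - 1)]) ω - Sig i ω| | F 0]) ω
        = (μ[fun ω => |(μ[fun ω => X i ω ^ 2 | F (i - 1)]) ω
          - condSecondMoment μ (F 0) (X i) ω| | F 0]) ω :=
    (ae_ball_iff (Finset.countable_toSet _)).2 fun i hi => condExp_congr_ae (by
      filter_upwards [hSigW i hi] with ω h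
      rw [h])
  have hβ0 : ∀ᵐ ω ∂μ, ∀ i ∈ Finset.Icc 1 n,
      0 ≤ (μ[fun ω => |(μ[fun ω => X i ω ^ 2 | F (i - 1)]) ω - Sig i ω| | F 0]) ω :=
    (ae_ball_iff (Finset.countable_toSet _)).2 fun i _ =>
      condExp_nonneg (ae_of_all _ fun ω => abs_nonneg _)
  have hX0 : ∀ᵐ ω ∂μ, ∀ i ∈ Finset.Icc 1 n, 0 ≤ (μ[fun ω => |X i ω| ^ 3 | F 0]) ω :=
    (ae_ball_iff (Finset.countable_toSet _)).2 fun i _ =>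
      condExp_nonneg (ae_of_all _ fun ω => by positivity)
  filter_upwards [hVW, hVpos, hFTq, hFSq, hcmp, hSig', hβ, hβ0, hX0]
    with ω hVω hpos hT hS hc hSg hb hb0 hx0
  set β := ∑ i ∈ Finset.Icc 1 n,
    (μ[fun ω' => |(μ[fun ω'' => X i ω'' ^ 2 | F (i - 1)]) ω' - Sig i ω'| | F 0]) ω with hβdef
  set Γ := ∑ i ∈ Finset.Icc 1 n,
    ((μ[fun ω' => |X i ω'| ^ 3 | F 0]) ω + Sig i ω ^ ((3 : ℝ) / 2)) with hΓdef
  have hSg0 : ∀ i ∈ Finset.Icc 1 n, 0 ≤ Sig i ω := fun i hi => by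
    rw [hSg i hi]; exact NNReal.coe_nonneg _
  have hβnn : 0 ≤ β := Finset.sum_nonneg hb0
  -- `V > 0` forces some `σ_i > 0`, hence `Γ > 0`
  have hΓpos : 0 < Γ := by
    have hsum : V ω = ∑ i ∈ Finset.Icc 1 n, Sig i ω := by
      rw [hVω, hWdef, NNReal.coe_sum]
      exact Finset.sum_congr rfl fun i hi => (hSg i hi).symm
    obtain ⟨i, hi, hipos⟩ := Finset.exists_lt_of_sum_lt (s := Finset.Icc 1 n)
      (f := fun _ => (0 : ℝ)) (g := fun i => Sig i ω) (by simpa [← hsum] using hpos)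
    exact Finset.sum_pos' (fun j hj => add_nonneg (hx0 j hj) (rpow_nonneg (hSg0 j hj) _))
      ⟨i, hi, add_pos_of_nonneg_of_pos (hx0 i hi) (rpow_pos_of_pos hipos _)⟩
  have hWne : W ω ≠ 0 := by
    intro h0
    rw [hVω, h0] at hpos
    exact lt_irrefl _ hpos
  set s := √(V ω) with hs
  have hspos : 0 < s := sqrt_pos.2 hpos
  have hV2 : V ω = s ^ 2 := (sq_sqrt hpos.le).symm
  have hV3 : V ω ^ ((3 : ℝ) / 2) = s ^ 3 := by
    rw [hs, sqrt_eq_rpow, ← rpow_natCast, ← rpow_mul hpos.le]; norm_num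
  have hD : ∀ ε : ℝ, 0 < ε → ∑ i ∈ Finset.Icc 1 n,
      (K / ε ^ 2 * (μ[fun ω => |(μ[fun ω => X i ω ^ 2 | F (i - 1)]) ω
          - condSecondMoment μ (F 0) (X i) ω| | F 0]) ω
        + K / ε ^ 3 * ((μ[fun ω => |X i ω| ^ 3 | F 0]) ω
          + gaussAbsThird * (condSecondMoment μ (F 0) (X i) ω : ℝ) ^ ((3 : ℝ) / 2)))
      ≤ K / ε ^ 2 * β + K * (1 + gaussAbsThird) / ε ^ 3 * Γ := by
    intro ε hε
    rw [hβdef, hΓdef, Finset.mul_sum, Finset.mul_sum, ← Finset.sum_add_distrib]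
    refine Finset.sum_le_sum fun i hi => ?_
    rw [← hb i hi, ← hSg i hi]
    have hy := rpow_nonneg (hSg0 i hi) ((3 : ℝ) / 2)
    have hx := hx0 i hi
    have : (μ[fun ω => |X i ω| ^ 3 | F 0]) ω + gaussAbsThird * Sig i ω ^ ((3 : ℝ) / 2)
        ≤ (1 + gaussAbsThird) *
          ((μ[fun ω => |X i ω| ^ 3 | F 0]) ω + Sig i ω ^ ((3 : ℝ) / 2)) := by
      nlinarith [mul_nonneg hm3 hx]
    have h' := mul_le_mul_of_nonneg_left this (show 0 ≤ K / ε ^ 3 by positivity)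
    have e : K * (1 + gaussAbsThird) / ε ^ 3 *
        ((μ[fun ω => |X i ω| ^ 3 | F 0]) ω + Sig i ω ^ ((3 : ℝ) / 2))
        = K / ε ^ 3 * ((1 + gaussAbsThird) *
          ((μ[fun ω => |X i ω| ^ 3 | F 0]) ω + Sig i ω ^ ((3 : ℝ) / 2))) := by ring
    rw [e]
    linarith
  have hanti : ∀ r ε : ℝ, 0 < ε → (gaussianReal 0 (W ω)).real (Set.Iic (r + ε))
      ≤ (gaussianReal 0 (W ω)).real (Set.Iic r) + ε / s := by
    intro r ε hε
    rw [hs, hVω]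
    exact gaussianReal_Iic_add_le hWne hε
  have hrat : ∀ q : ℚ, |FS ω q - FT ω q| ≤
      (2 + K + K * (1 + gaussAbsThird)) * (β / V ω / √(Γ / V ω ^ ((3 : ℝ) / 2))
        + (Γ / V ω ^ ((3 : ℝ) / 2)) ^ ((1 : ℝ) / 4)) := by
    intro q
    rw [hV3]
    nth_rewrite 1 [hV2]
    refine optimise hspos hβnn hΓpos hK (by positivity) fun ε hε => ?_
    have hε' : (0 : ℝ) < ε := by exact_mod_cast hε
    have a1 := hanti q ε hε'
    have a2 := hanti (q - ε) ε hε'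
    have hd := hD ε (by exact_mod_cast hε)
    -- the upper bound uses the smoothed indicator based at `q`, the lower one that at `q - ε`
    have h1 := (hc q ⟨ε, hε⟩).1
    have h2 := (hc (q - ε) ⟨ε, hε⟩).2
    push_cast at h2
    simp only [sub_add_cancel] at h2 a2
    rw [← hS q] at h1 h2
    rw [← hT q] at a1 a2
    rw [abs_le]
    constructor <;> linarith
  exact ciSup_le fun r => abs_sub_le_of_rat (hFScont ω) (hFTcont ω) hrat r
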